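/- arXiv:2105.07056 — 2 statements merged into one kernel-verified Lean document; each statement's English description precedes it below -/
import Mathlib

section
/- Let N ≥ 2 be an even integer and let f be a discrete function with f̂_0 = f̂_{N/2} = 0, extended N-periodically in its index. Then H_h(S_h f) = S_h(H_h f), and for each grid index i, (H_h(S_h f))_i = (2h/π) Σ_{j∈ℤ, (j−i) odd} (f_i − f_j)/(α_i − α_j)², where α_j = jh for all j ∈ ℤ and the series over all integers j with j − i odd converges absolutely. -/
/-!
Both operators are Fourier multipliers on the grid, and Fourier multipliers commute. For `H_h` this
is the closed form of the conjugate Dirichlet kernel: if `Mθ = mπ`, then `∑_{k < M} sin (kθ)` equals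
`cot (θ/2)` for odd `m` and vanishes for even `m`. So `H_h` has symbol `-i sgn k`, and `H_h S_h` has
symbol `|k|`, both cut off at `k = N/2`. The series over the extended grid is a Fourier multiplier
as well, with symbol proportional to `|k|`, because `∑_{n odd} (1 - e^{2πinx}) / n² = π² |x|` for
`|x| ≤ 1/2`.
-/

open scoped BigOperators
open Finset

noncomputable section

/-- Grid spacing `h = 2π/N`. -/
def hgrid (N : ℤ) : ℝ := 2 * Real.pi / N

/-- Grid points `α_j = j h`. -/
def gridPt (N : ℤ) (j : ℤ) : ℝ := j * hgrid N

/-- Index set `{-N/2+1, …, N/2}`. -/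
def idxs (N : ℤ) : Finset ℤ := Finset.Icc (-(N / 2) + 1) (N / 2)

/-- Discrete Fourier coefficient `f̂_k`. -/
def dft (N : ℤ) (f : ℤ → ℂ) (k : ℤ) : ℂ :=
  (N : ℂ)⁻¹ * ∑ j ∈ idxs N, f j * Complex.exp (-(Complex.I * (k : ℂ) * (gridPt N j : ℂ)))

/-- Reconstruction of a discrete function from Fourier coefficients. -/
def idft (N : ℤ) (c : ℤ → ℂ) (j : ℤ) : ℂ :=
  ∑ k ∈ idxs N, c k * Complex.exp (Complex.I * (k : ℂ) * (gridPt N j : ℂ))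

/-- The pseudo-spectral derivative `S_h`. -/
def Sh (N : ℤ) (f : ℤ → ℂ) : ℤ → ℂ :=
  idft N fun k => if k = N / 2 then 0 else Complex.I * (k : ℂ) * dft N f k

/-- The pseudo-spectral antiderivative `S_h⁻¹`. -/
def Shinv (N : ℤ) (f : ℤ → ℂ) : ℤ → ℂ :=
  idft N fun k => if k = 0 then 0 else dft N f k / (Complex.I * (k : ℂ))

/-- The filtered discrete function `f^p`. -/
def filterP (N : ℤ) (ρ : ℝ → ℝ) (f : ℤ → ℂ) : ℤ → ℂ :=
  idft N fun k => (ρ (gridPt N k) : ℂ) * dft N f k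

/-- The filtered derivative `D_h`. -/
def Dh (N : ℤ) (ρ : ℝ → ℝ) (f : ℤ → ℂ) : ℤ → ℂ :=
  idft N fun k => Complex.I * (k : ℂ) * (ρ (gridPt N k) : ℂ) * dft N f k

/-- Discrete `l²` norm. -/
def l2norm (N : ℤ) (f : ℤ → ℂ) : ℝ :=
  Real.sqrt (hgrid N * ∑ j ∈ idxs N, ‖f j‖ ^ 2)

/-- Discrete Hilbert transform `H_h`. -/
def Hh (N : ℤ) (f : ℤ → ℂ) (i : ℤ) : ℂ :=
  ((hgrid N / Real.pi : ℝ) : ℂ) *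
    ∑ j ∈ (idxs N).filter (fun j => Odd (j - i)),
      f j * (Real.cot ((gridPt N i - gridPt N j) / 2) : ℂ)

/-- Discrete inner product `(f,g)_h`. -/
def dip (N : ℤ) (f g : ℤ → ℂ) : ℂ :=
  (hgrid N : ℂ) * ∑ j ∈ idxs N, (starRingEnd ℂ) (f j) * g j

/-- Discrete mean `⟨f⟩_h`. -/
def dmean (N : ℤ) (f : ℤ → ℂ) : ℂ :=
  (N : ℂ)⁻¹ * ∑ j ∈ idxs N, f j

/-- The discrete function of samples of a periodic function. -/
def samples (N : ℤ) (f : ℝ → ℂ) : ℤ → ℂ := fun j => f (gridPt N j)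

/-- Fourier coefficient of a `2π`-periodic function. -/
def fourierCoeffP (f : ℝ → ℂ) (k : ℤ) : ℂ :=
  ((2 * Real.pi)⁻¹ : ℝ) * ∫ α in (-Real.pi)..Real.pi, f α * Complex.exp (-(Complex.I * (k : ℂ) * (α : ℂ)))

/-- Sobolev norm `‖f‖_s`. -/
def sobolevNorm (s : ℕ) (f : ℝ → ℂ) : ℝ :=
  Real.sqrt (∑' k : ℤ, (1 + (k : ℝ) ^ 2) ^ s * ‖fourierCoeffP f k‖ ^ 2)

/-- A filter (cutoff) function for numerical filtering. -/
structure IsFilter (ρ : ℝ → ℝ) : Prop where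
  even : ∀ x, ρ (-x) = ρ x
  nonneg : ∀ x, 0 ≤ ρ x
  smooth : ∃ r : ℕ, 2 < r ∧ ContDiff ℝ r ρ
  zero_at_pi : ρ Real.pi = 0
  zero_at_neg_pi : ρ (-Real.pi) = 0
  deriv_zero_at_pi : deriv ρ Real.pi = 0
  deriv_zero_at_neg_pi : deriv ρ (-Real.pi) = 0
  one_near_zero : ∃ μ : ℝ, 0 < μ ∧ μ < 1 ∧ ∀ x : ℝ, |x| ≤ μ * Real.pi → ρ x = 1

section Grid

variable {N : ℤ}

/-- The discrete Fourier mode `j ↦ e^{ikα_j}`. -/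
def gridMode (N k j : ℤ) : ℂ := Complex.exp (Complex.I * (k : ℂ) * (gridPt N j : ℂ))

lemma gridPt_sub (N i j : ℤ) : gridPt N i - gridPt N j = gridPt N (i - j) := by
  simp only [gridPt]
  push_cast
  ring

lemma gridMode_eq_exp (N k j : ℤ) :
    gridMode N k j = Complex.exp (2 * Real.pi * Complex.I * ((k * j : ℤ) : ℂ) / N) := by
  simp only [gridMode, gridPt, hgrid]
  congr 1
  push_cast
  ring

lemma gridMode_add_left (N k l j : ℤ) :
    gridMode N (k + l) j = gridMode N k j * gridMode N l j := by
  simp only [gridMode, ← Complex.exp_add]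
  congr 1
  push_cast
  ring

lemma gridMode_add_right (N k i j : ℤ) :
    gridMode N k (i + j) = gridMode N k i * gridMode N k j := by
  simp only [gridMode_eq_exp, ← Complex.exp_add]
  congr 1
  push_cast
  ring

lemma gridMode_neg_left (N k j : ℤ) : gridMode N (-k) j = gridMode N k (-j) := by
  simp only [gridMode_eq_exp, neg_mul, mul_neg]

lemma gridMode_natCast_right (N k : ℤ) (n : ℕ) : gridMode N k n = gridMode N k 1 ^ n := by
  simp only [gridMode_eq_exp, ← Complex.exp_nat_mul]
  congr 1
  push_cast
  ring

lemma gridMode_comm (N k j : ℤ) : gridMode N k j = gridMode N j k := by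
  rw [gridMode_eq_exp, gridMode_eq_exp, mul_comm k j]

lemma gridMode_eq_one_iff (hN : N ≠ 0) (k j : ℤ) : gridMode N k j = 1 ↔ N ∣ k * j := by
  have hNC : (N : ℂ) ≠ 0 := by exact_mod_cast hN
  rw [gridMode_eq_exp, Complex.exp_eq_one_iff]
  refine exists_congr fun n => ?_
  rw [div_eq_iff hNC, mul_comm (n : ℂ), mul_assoc (2 * Real.pi * Complex.I : ℂ),
    mul_right_inj' Complex.two_pi_I_ne_zero, mul_comm (n : ℂ)]
  norm_cast

lemma idxs_eq_Ioc (N : ℤ) : idxs N = Ioc (-(N / 2)) (N / 2) := by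
  ext
  simp only [idxs, mem_Icc, mem_Ioc]
  omega

lemma dvd_sub_iff_of_mem_idxs {k l : ℤ} (hk : k ∈ idxs N) (hl : l ∈ idxs N) :
    N ∣ k - l ↔ k = l := by
  simp only [idxs, mem_Icc] at hk hl
  refine ⟨fun h => ?_, fun h => by simp [h]⟩
  have := Int.eq_zero_of_abs_lt_dvd h (by rw [abs_lt]; omega)
  omega

lemma exists_mem_idxs_dvd_sub (hN : 0 < N) (hNe : Even N) (j : ℤ) :
    ∃ l ∈ idxs N, N ∣ j - l := by
  obtain ⟨n, hn, -⟩ := existsUnique_add_zsmul_mem_Ioc hN j (-(N / 2))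
  refine ⟨j + n • N, ?_, by simp⟩
  rw [Set.mem_Ioc] at hn
  rw [idxs_eq_Ioc, mem_Ioc]
  obtain ⟨M, rfl⟩ := hNe
  omega

lemma sum_idxs_eq_sum_range (hNe : Even N) (g : ℤ → ℂ) :
    ∑ j ∈ idxs N, g j = ∑ n ∈ range N.toNat, g (-(N / 2) + 1 + n) := by
  have hlen : N / 2 + 1 - (-(N / 2) + 1) = N := by
    obtain ⟨M, rfl⟩ := hNe
    omega
  simp [idxs, Int.Icc_eq_finset_map, sum_map, hlen]

lemma sum_gridMode (hN : 0 < N) (hNe : Even N) (k : ℤ) :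
    ∑ j ∈ idxs N, gridMode N k j = if N ∣ k then (N : ℂ) else 0 := by
  have hcast : (N.toNat : ℂ) = N := by exact_mod_cast Int.toNat_of_nonneg hN.le
  split_ifs with hk
  · rw [sum_idxs_eq_sum_range hNe,
      sum_congr rfl fun n _ => (gridMode_eq_one_iff hN.ne' k _).2 (hk.mul_right _)]
    simp [hcast]
  · have hne : gridMode N k 1 ≠ 1 := by rwa [ne_eq, gridMode_eq_one_iff hN.ne', mul_one]
    have hpow : gridMode N k 1 ^ N.toNat = 1 := by
      rw [← gridMode_natCast_right, Int.toNat_of_nonneg hN.le, gridMode_eq_one_iff hN.ne']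
      exact dvd_mul_left N k
    simp only [sum_idxs_eq_sum_range hNe, gridMode_add_right N k _ (Nat.cast _),
      gridMode_natCast_right, ← mul_sum]
    rw [geom_sum_eq hne, hpow, sub_self, zero_div, mul_zero]

end Grid

section FourierMultiplier

variable {N : ℤ}

lemma idft_apply (N : ℤ) (c : ℤ → ℂ) (j : ℤ) :
    idft N c j = ∑ k ∈ idxs N, c k * gridMode N k j := rfl

lemma dft_eq_sum_gridMode (N : ℤ) (f : ℤ → ℂ) (k : ℤ) :
    dft N f k = (N : ℂ)⁻¹ * ∑ j ∈ idxs N, f j * gridMode N (-k) j := by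
  simp only [dft, gridMode]
  push_cast
  simp only [mul_neg, neg_mul]

lemma idft_congr {c d : ℤ → ℂ} (h : ∀ k ∈ idxs N, c k = d k) : idft N c = idft N d :=
  funext fun _ => sum_congr rfl fun k hk => by rw [h k hk]

lemma dft_idft (hN : 0 < N) (hNe : Even N) (c : ℤ → ℂ) {k : ℤ} (hk : k ∈ idxs N) :
    dft N (idft N c) k = c k := by
  have hNC : (N : ℂ) ≠ 0 := by exact_mod_cast hN.ne'
  simp only [dft_eq_sum_gridMode, idft_apply, sum_mul]
  rw [sum_comm]
  simp only [mul_assoc, ← gridMode_add_left, ← mul_sum, sum_gridMode hN hNe, ← sub_eq_add_neg]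
  rw [sum_eq_single_of_mem k hk fun l hl hlk => by
    rw [if_neg (by rwa [dvd_sub_iff_of_mem_idxs hl hk]), mul_zero]]
  simp [mul_comm (c k), hNC]

/-- The operator on discrete functions that multiplies the Fourier coefficient `f̂_k` by the symbol
`m k`, for `k` in the index set `{-N/2+1, …, N/2}`. -/
def fourierMultiplier (N : ℤ) (m : ℤ → ℂ) (f : ℤ → ℂ) : ℤ → ℂ :=
  idft N fun k => m k * dft N f k

lemma fourierMultiplier_comp (hN : 0 < N) (hNe : Even N) (m m' f : ℤ → ℂ) :
    fourierMultiplier N m (fourierMultiplier N m' f) = fourierMultiplier N (m * m') f :=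
  idft_congr fun k hk => by
    rw [fourierMultiplier, dft_idft hN hNe _ hk, Pi.mul_apply, mul_assoc]

lemma fourierMultiplier_comm (hN : 0 < N) (hNe : Even N) (m m' f : ℤ → ℂ) :
    fourierMultiplier N m (fourierMultiplier N m' f)
      = fourierMultiplier N m' (fourierMultiplier N m f) := by
  rw [fourierMultiplier_comp hN hNe, fourierMultiplier_comp hN hNe, mul_comm]

lemma fourierMultiplier_eq_convolution (N : ℤ) (m f : ℤ → ℂ) (i : ℤ) :
    fourierMultiplier N m f i
      = (N : ℂ)⁻¹ * ∑ j ∈ idxs N, f j * ∑ k ∈ idxs N, m k * gridMode N k (i - j) := by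
  simp only [fourierMultiplier, idft_apply, dft_eq_sum_gridMode, sub_eq_add_neg,
    gridMode_add_right, gridMode_neg_left, mul_sum, sum_mul]
  rw [sum_comm]
  exact sum_congr rfl fun j _ => sum_congr rfl fun k _ => by ring

lemma idft_dft (hN : 0 < N) (hNe : Even N) {f : ℤ → ℂ} (hf : Function.Periodic f N) :
    idft N (dft N f) = f := by
  have hNC : (N : ℂ) ≠ 0 := by exact_mod_cast hN.ne'
  funext j
  obtain ⟨l, hl, n, hn⟩ := exists_mem_idxs_dvd_sub hN hNe j
  have hfl : f j = f l := by
    rw [eq_add_of_sub_eq' hn, mul_comm]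
    exact hf.int_mul n l
  have hconv := fourierMultiplier_eq_convolution N 1 f j
  simp only [fourierMultiplier, Pi.one_apply, one_mul, gridMode_comm N _ (j - _),
    sum_gridMode hN hNe] at hconv
  rw [hconv, hfl, sum_eq_single_of_mem l hl, if_pos ⟨n, hn⟩, mul_comm (f l),
    inv_mul_cancel_left₀ hNC]
  intro l' hl' hne
  rw [if_neg, mul_zero]
  rw [dvd_sub_comm, ← sub_add_sub_cancel l' l j, dvd_add_left (dvd_sub_comm.1 ⟨n, hn⟩),
    dvd_sub_iff_of_mem_idxs hl' hl]
  exact hne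

end FourierMultiplier

section HilbertSymbol

variable {N : ℤ}

lemma two_mul_sin_half_mul_sum_sin (θ : ℝ) (M : ℕ) :
    2 * Real.sin (θ / 2) * ∑ k ∈ range M, Real.sin (k * θ)
      = Real.cos (θ / 2) - Real.cos (M * θ - θ / 2) := by
  induction M with
  | zero => simp
  | succ M ih =>
    have hprod := Real.two_mul_sin_mul_sin (θ / 2) (M * θ)
    rw [← Real.cos_neg, neg_sub] at hprod
    rw [sum_range_succ, mul_add, ih, hprod, sub_add_sub_cancel]
    congr 2
    push_cast
    ring

lemma sum_sin_eq_cot_half {θ : ℝ} {M : ℕ} {m : ℤ} (hθ : M * θ = m * Real.pi) :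
    ∑ k ∈ range M, Real.sin (k * θ) = if Odd m then Real.cot (θ / 2) else 0 := by
  by_cases hsin : Real.sin (θ / 2) = 0
  · obtain ⟨l, hl⟩ := Real.sin_eq_zero_iff.1 hsin
    have hzero (k : ℕ) : Real.sin (k * θ) = 0 :=
      Real.sin_eq_zero_iff.2 ⟨2 * k * l, by push_cast; linear_combination 2 * k * hl⟩
    simp [hzero, Real.cot_eq_cos_div_sin, hsin]
  · have hsum := two_mul_sin_half_mul_sum_sin θ M
    rw [hθ, Real.cos_int_mul_pi_sub] at hsum
    split_ifs with hm
    · rw [Real.cot_eq_cos_div_sin, eq_div_iff hsin]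
      rw [hm.neg_one_zpow] at hsum
      linarith
    · rw [(Int.not_odd_iff_even.1 hm).neg_one_zpow, one_mul, sub_self] at hsum
      simpa [hsin] using hsum

lemma sum_sign_mul_exp (θ : ℝ) (n : ℕ) :
    ∑ k ∈ Icc (-n : ℤ) n, -Complex.I * (k.sign : ℂ) * Complex.exp (Complex.I * k * θ)
      = 2 * ∑ k ∈ range (n + 1), (Real.sin (k * θ) : ℂ) := by
  induction n with
  | zero => simp
  | succ n ih =>
    have hsign : ((n : ℤ) + 1).sign = 1 := Int.sign_eq_one_of_pos (by positivity)
    have hpair : 2 * Complex.sin ((n + 1) * θ) = -Complex.I * Complex.exp (Complex.I * (n + 1) * θ)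
        + Complex.I * Complex.exp (Complex.I * -(n + 1) * θ) := by
      rw [Complex.sin]
      ring_nf
    push_cast at ih ⊢
    rw [sum_Icc_succ_eq_add_endpoints, ih, sum_range_succ _ (n + 1), Int.sign_neg, hsign]
    push_cast
    linear_combination -hpair

/-- The symbol `-i sgn k` of the discrete Hilbert transform, cut off at `k = N/2`. -/
def hilbertSymbol (N k : ℤ) : ℂ := if k = N / 2 then 0 else -Complex.I * (k.sign : ℂ)

/-- The symbol `ik` of the pseudo-spectral derivative, cut off at `k = N/2`. -/
def derivSymbol (N k : ℤ) : ℂ := if k = N / 2 then 0 else Complex.I * (k : ℂ)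

lemma sum_hilbertSymbol_mul_gridMode (hN : 0 < N) (hNe : Even N) (m : ℤ) :
    ∑ k ∈ idxs N, hilbertSymbol N k * gridMode N k m
      = if Odd m then 2 * (Real.cot (gridPt N m / 2) : ℂ) else 0 := by
  obtain ⟨n, hn⟩ : ∃ n : ℕ, N = 2 * (n + 1) := by
    obtain ⟨M, rfl⟩ := hNe
    exact ⟨(M - 1).toNat, by omega⟩
  have hhalf : N / 2 = n + 1 := by omega
  have hangle : ((n + 1 : ℕ) : ℝ) * gridPt N m = m * Real.pi := by
    rw [gridPt, hgrid, hn]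
    push_cast
    field_simp
  calc ∑ k ∈ idxs N, hilbertSymbol N k * gridMode N k m
      = ∑ k ∈ Icc (-n : ℤ) n, -Complex.I * (k.sign : ℂ) * gridMode N k m := by
        rw [idxs, hhalf]
        symm
        refine sum_subset_zero_on_sdiff (Icc_subset_Icc (by omega) (by omega)) ?_ ?_
        · intro k hk
          simp only [mem_sdiff, mem_Icc] at hk
          rw [hilbertSymbol, if_pos (by omega), zero_mul]
        · intro k hk
          rw [mem_Icc] at hk
          rw [hilbertSymbol, if_neg (by omega)]
    _ = 2 * ((∑ k ∈ range (n + 1), Real.sin (k * gridPt N m) : ℝ) : ℂ) := by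
        rw [Complex.ofReal_sum]
        exact sum_sign_mul_exp (gridPt N m) n
    _ = if Odd m then 2 * (Real.cot (gridPt N m / 2) : ℂ) else 0 := by
        rw [sum_sin_eq_cot_half hangle]
        split_ifs <;> simp

lemma Hh_eq_fourierMultiplier (hN : 0 < N) (hNe : Even N) (f : ℤ → ℂ) :
    Hh N f = fourierMultiplier N (hilbertSymbol N) f := by
  funext i
  have hscale : hgrid N / Real.pi = 2 / N := by
    rw [hgrid]
    field_simp
  simp only [fourierMultiplier_eq_convolution, sum_hilbertSymbol_mul_gridMode hN hNe, Hh, hscale,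
    gridPt_sub, sum_filter, mul_sum, ← neg_sub i, odd_neg]
  refine sum_congr rfl fun j _ => ?_
  push_cast
  split_ifs <;> ring

lemma Sh_eq_fourierMultiplier (N : ℤ) (f : ℤ → ℂ) :
    Sh N f = fourierMultiplier N (derivSymbol N) f :=
  idft_congr fun k _ => by rw [derivSymbol, ite_mul, zero_mul]

lemma Hh_Sh_comm (hN : 0 < N) (hNe : Even N) (f : ℤ → ℂ) :
    Hh N (Sh N f) = Sh N (Hh N f) := by
  simp only [Hh_eq_fourierMultiplier hN hNe, Sh_eq_fourierMultiplier]
  exact fourierMultiplier_comm hN hNe _ _ f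

lemma hilbertSymbol_mul_derivSymbol (N k : ℤ) :
    hilbertSymbol N k * derivSymbol N k = if k = N / 2 then 0 else ((|k| : ℤ) : ℂ) := by
  rw [hilbertSymbol, derivSymbol, ← Int.sign_mul_self_eq_abs]
  split_ifs
  · rw [zero_mul]
  · push_cast
    linear_combination -(k.sign * k : ℂ) * Complex.I_mul_I

/-- The subtracted term is the mode `k = N/2`, which `S_h` annihilates. -/
lemma Hh_Sh_eq_fourierMultiplier_abs_sub (hN : 0 < N) (hNe : Even N) (f : ℤ → ℂ) (i : ℤ) :
    Hh N (Sh N f) i = fourierMultiplier N (fun k => ((|k| : ℤ) : ℂ)) f i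
      - ((N / 2 : ℤ) : ℂ) * dft N f (N / 2) * gridMode N (N / 2) i := by
  have hmem : N / 2 ∈ idxs N := by
    rw [idxs_eq_Ioc, mem_Ioc]
    obtain ⟨M, rfl⟩ := hNe
    omega
  have habs : |N / 2| = N / 2 := abs_of_nonneg (by omega)
  rw [Hh_eq_fourierMultiplier hN hNe, Sh_eq_fourierMultiplier, fourierMultiplier_comp hN hNe]
  simp only [fourierMultiplier, idft_apply, Pi.mul_apply, hilbertSymbol_mul_derivSymbol]
  rw [← add_sum_erase _ _ hmem, ← add_sum_erase _ _ hmem, if_pos rfl, habs, zero_mul, zero_mul,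
    zero_add, add_sub_cancel_left]
  exact sum_congr rfl fun k hk => by rw [if_neg (ne_of_mem_erase hk)]

end HilbertSymbol

section OddSeries

lemma hasSum_ite_odd {α : Type*} [AddCommGroup α] [TopologicalSpace α] [IsTopologicalAddGroup α]
    {g : ℤ → α} {a b : α} (hall : HasSum g a) (heven : HasSum (fun n => g (2 * n)) b) :
    HasSum (fun n => if Odd n then g n else 0) (a - b) := by
  have hrange : HasSum (fun n => if Odd n then 0 else g n) b := by
    refine ((mul_right_injective₀ (two_ne_zero' ℤ)).hasSum_iff fun n hn => if_pos ?_).1 ?_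
    · exact Int.not_even_iff_odd.1 fun h => hn ((even_iff_exists_two_mul.1 h).imp fun _ => Eq.symm)
    · simpa [Function.comp_def, ← Int.not_even_iff_odd] using heven
  refine (hall.sub hrange).congr_fun fun n => ?_
  split_ifs <;> simp

lemma hasSum_exp_div_sq {x : ℝ} (hx : x ∈ Set.Icc (0 : ℝ) 1) :
    HasSum (fun n : ℤ => Complex.exp (2 * Real.pi * Complex.I * n * x) / (n : ℂ) ^ 2)
      (2 * Real.pi ^ 2 * (x ^ 2 - x + 6⁻¹)) := by
  convert! hasSum_one_div_pow_mul_fourier_mul_bernoulliFun le_rfl hx using 1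
  · funext n
    rw [fourier_coe_apply, Complex.ofReal_one, div_one, one_div_mul_eq_div]
  · rw [bernoulliFun_two, mul_pow, Complex.I_sq, Nat.factorial_two]
    push_cast
    ring

lemma hasSum_odd_exp_div_sq {x : ℝ} (hx : x ∈ Set.Icc (0 : ℝ) (1 / 2)) :
    HasSum (fun n : ℤ => if Odd n then
        Complex.exp (2 * Real.pi * Complex.I * n * x) / (n : ℂ) ^ 2 else 0)
      (Real.pi ^ 2 * (1 / 4 - x)) := by
  obtain ⟨hx0, hx1⟩ := hx
  have heven : HasSum (fun n : ℤ => Complex.exp (2 * Real.pi * Complex.I * (2 * n : ℤ) * x) /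
      ((2 * n : ℤ) : ℂ) ^ 2) (1 / 4 * (2 * Real.pi ^ 2 * ((2 * x) ^ 2 - 2 * x + 6⁻¹))) := by
    convert! (hasSum_exp_div_sq (x := 2 * x) ⟨by linarith, by linarith⟩).mul_left (1 / 4) using 1
    · funext n
      push_cast
      ring_nf
    · push_cast
      rfl
  convert! hasSum_ite_odd (hasSum_exp_div_sq ⟨hx0, by linarith⟩) heven using 1
  ring

lemma hasSum_odd_one_sub_exp_div_sq {x : ℝ} (hx : |x| ≤ 1 / 2) :
    HasSum (fun n : ℤ => if Odd n then
        (1 - Complex.exp (2 * Real.pi * Complex.I * n * x)) / (n : ℂ) ^ 2 else 0)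
      ((Real.pi ^ 2 * |x| : ℝ) : ℂ) := by
  wlog hx0 : 0 ≤ x generalizing x
  · have hneg := this (x := -x) (by rwa [abs_neg]) (by linarith)
    rw [abs_neg, ← (Equiv.neg ℤ).hasSum_iff] at hneg
    refine hneg.congr_fun fun n => ?_
    simp
  · rw [abs_of_nonneg hx0] at hx ⊢
    convert! (hasSum_odd_exp_div_sq (x := 0) (by norm_num)).sub
      (hasSum_odd_exp_div_sq ⟨hx0, hx⟩) using 1
    · funext n
      split_ifs <;> simp [sub_div]
    · push_cast
      ring

variable {N : ℤ}

/-- The `j`-th term of the series for `H_h S_h f` at the grid index `i`, with the terms for even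
`j - i` set to zero. -/
def oddDiffQuot (N : ℤ) (f : ℤ → ℂ) (i j : ℤ) : ℂ :=
  if Odd (j - i) then (f i - f j) / ((gridPt N i - gridPt N j : ℝ) : ℂ) ^ 2 else 0

lemma oddDiffQuot_idft (N : ℤ) (c : ℤ → ℂ) (i j : ℤ) :
    oddDiffQuot N (idft N c) i j = ∑ k ∈ idxs N, c k * oddDiffQuot N (gridMode N k) i j := by
  simp only [oddDiffQuot]
  split_ifs
  · simp only [idft_apply, ← sum_sub_distrib, ← mul_sub, sum_div, mul_div_assoc]
  · simp

lemma oddDiffQuot_gridMode_add (N k i n : ℤ) :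
    oddDiffQuot N (gridMode N k) i (i + n) = gridMode N k i / (hgrid N : ℂ) ^ 2 *
      if Odd n then (1 - gridMode N k n) / (n : ℂ) ^ 2 else 0 := by
  rw [oddDiffQuot, add_sub_cancel_left, gridPt_sub, sub_add_cancel_left, gridPt,
    gridMode_add_right]
  split_ifs
  · push_cast
    ring
  · rw [mul_zero]

lemma hasSum_oddDiffQuot_gridMode (hN : 0 < N) {k : ℤ} (hk : k ∈ idxs N) (i : ℤ) :
    HasSum (oddDiffQuot N (gridMode N k) i)
      (Real.pi / (2 * hgrid N) * ((|k| : ℤ) : ℂ) * gridMode N k i) := by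
  have hNR : (0 : ℝ) < N := by exact_mod_cast hN
  have habs : |(k : ℝ) / N| = (|k| : ℤ) / N := by rw [abs_div, abs_of_pos hNR, Int.cast_abs]
  have hx : |(k : ℝ) / N| ≤ 1 / 2 := by
    have hk2 : |k| * 2 ≤ N := by
      simp only [idxs, mem_Icc] at hk
      rcases abs_cases k with h | h <;> omega
    rw [habs, div_le_div_iff₀ hNR two_pos, one_mul]
    exact_mod_cast hk2
  rw [← (Equiv.addLeft i).hasSum_iff]
  convert! (hasSum_odd_one_sub_exp_div_sq hx).mul_left (gridMode N k i / (hgrid N : ℂ) ^ 2) using 1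
  · funext n
    simp only [Function.comp_apply, Equiv.coe_addLeft, oddDiffQuot_gridMode_add, gridMode_eq_exp]
    push_cast
    ring_nf
  · rw [habs, hgrid]
    push_cast
    rw [← Int.cast_abs, Complex.ofReal_intCast]
    field_simp

lemma hasSum_oddDiffQuot (hN : 0 < N) (hNe : Even N) {f : ℤ → ℂ} (hf : Function.Periodic f N)
    (i : ℤ) :
    HasSum (oddDiffQuot N f i)
      (Real.pi / (2 * hgrid N) * fourierMultiplier N (fun k => ((|k| : ℤ) : ℂ)) f i) := by
  have hsum := hasSum_sum fun k hk => (hasSum_oddDiffQuot_gridMode hN hk i).mul_left (dft N f k)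
  simp only [← oddDiffQuot_idft, idft_dft hN hNe hf] at hsum
  convert! hsum using 1
  rw [fourierMultiplier, idft_apply, mul_sum]
  exact sum_congr rfl fun k _ => by ring

end OddSeries

theorem discrete_hilbert_derivative_commute_general {N : ℤ} (hN : 0 < N) (hNe : Even N)
    {f : ℤ → ℂ} (hf : Function.Periodic f N) :
    Hh N (Sh N f) = Sh N (Hh N f) ∧
    ∀ i, Summable (fun j => ‖oddDiffQuot N f i j‖) ∧
      Hh N (Sh N f) i = ((2 * hgrid N / Real.pi : ℝ) : ℂ) * ∑' j, oddDiffQuot N f i j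
        - ((N / 2 : ℤ) : ℂ) * dft N f (N / 2) * gridMode N (N / 2) i := by
  refine ⟨Hh_Sh_comm hN hNe f, fun i => ?_⟩
  have hsum := hasSum_oddDiffQuot hN hNe hf i
  have hscale : (2 * hgrid N / Real.pi : ℂ) * (Real.pi / (2 * hgrid N)) = 1 := by
    have hNC : (N : ℂ) ≠ 0 := by exact_mod_cast hN.ne'
    rw [hgrid]
    push_cast
    field_simp
  refine ⟨hsum.summable.norm, ?_⟩
  rw [Hh_Sh_eq_fourierMultiplier_abs_sub hN hNe, hsum.tsum_eq, ← mul_assoc]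
  push_cast
  rw [hscale, one_mul]

/-- Lemma 8.3, part (iii): `H_h` and `S_h` commute, and their
composition is given by an absolutely convergent series over the periodically
extended grid. -/
theorem discrete_hilbert_derivative_commute (N : ℤ) (hN : 2 ≤ N) (hNe : Even N)
    (f : ℤ → ℂ) (hper : ∀ j : ℤ, f (j + N) = f j)
    (h0 : dft N f 0 = 0) (hN2 : dft N f (N / 2) = 0) :
    (∀ i ∈ idxs N, Hh N (Sh N f) i = Sh N (Hh N f) i) ∧
    (∀ i ∈ idxs N,
      Summable (fun j : ℤ =>
        ‖(if Odd (j - i) then (f i - f j) / ((gridPt N i - gridPt N j : ℝ) : ℂ) ^ 2 else 0)‖) ∧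
      Hh N (Sh N f) i = ((2 * hgrid N / Real.pi : ℝ) : ℂ) *
        ∑' j : ℤ,
          (if Odd (j - i) then (f i - f j) / ((gridPt N i - gridPt N j : ℝ) : ℂ) ^ 2 else 0)) := by
  obtain ⟨hcomm, hseries⟩ := discrete_hilbert_derivative_commute_general (by omega) hNe hper
  exact ⟨fun i _ => congrFun hcomm i, fun i _ => by simpa [hN2, oddDiffQuot] using hseries i⟩

end
end

section
/- Let f : ℝ → ℂ be 2π-periodic of class C³ and let ρ be a filter function of class C^r with r > 2. Define q(x) = d/dx (x ρ(x)), and for a discrete function w define the discrete function w^q by (w^q)̂_k = q(kh) ŵ_k. Then there exists a constant c > 0, depending only on f and ρ and not on N or w, such that for every even integer N ≥ 2 and every discrete function w, the remainder r(w)_i := (D_h(f(α_·) w))_i − f(α_i)(D_h w)_i − (w^q)_i f′(α_i) satisfies ‖D_h^k(r(w))‖_{l²} ≤ c ‖w‖_{l²} and ‖r(S_h^k w)‖_{l²} ≤ c ‖w‖_{l²} for every k ∈ {0, 1}. -/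
open scoped BigOperators
open Finset

noncomputable section

/-- `q(x) = d/dx (x ρ(x))`. -/
def qfilt (ρ : ℝ → ℝ) (x : ℝ) : ℝ := deriv (fun y => y * ρ y) x

/-- The discrete function `w^q` with Fourier coefficients `q(kh) ŵ_k`. -/
def wq (N : ℤ) (ρ : ℝ → ℝ) (w : ℤ → ℂ) : ℤ → ℂ :=
  idft N fun k => (qfilt ρ (gridPt N k) : ℂ) * dft N w k

/-- Remainder in the discrete product rule for `D_h`. -/
def DhProdRem (N : ℤ) (ρ : ℝ → ℝ) (f : ℝ → ℂ) (w : ℤ → ℂ) (i : ℤ) : ℂ :=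
  Dh N ρ (fun j => f (gridPt N j) * w j) i - f (gridPt N i) * Dh N ρ w i -
    wq N ρ w i * deriv f (gridPt N i)

/- Writing `f = ∑ cₘ e^{imx}` reduces the remainder to single modes: conjugating `D_h` by `e^{imα}`
shifts its symbol by `m`, so the `m`-th term is `cₘ e^{imα}` times the Fourier multiplier with
symbol `(i / h) (G (kh + mh) - G (kh) - mh q(kh))`, where `G` is the `2π`-periodization of `x ρ(x)`.
The boundary values of `ρ` make `G'` Lipschitz, so the symbol is `O(h m²)`, and `∑ m² |cₘ| < ∞` for
`f` of class `C³`. The resulting factor `h` pays for one application of `D_h` or `S_h`. -/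

section Periodization

variable {α E : Type*} {T : ℝ} (hT : 0 < T) {a : ℝ}

/-- The extension of `g` from `[a, a + T)` to a `T`-periodic function on the line. -/
def periodize (a : ℝ) (g : ℝ → α) (x : ℝ) : α :=
  g (toIcoMod hT a x)

theorem periodize_periodic (a : ℝ) (g : ℝ → α) : Function.Periodic (periodize hT a g) T :=
  fun x => congrArg g (toIcoMod_periodic hT a x)

theorem periodize_eq_self {g : ℝ → α} (hga : g a = g (a + T)) {x : ℝ}
    (hx : x ∈ Set.Icc a (a + T)) : periodize hT a g x = g x := by
  rcases eq_or_lt_of_le hx.2 with rfl | hlt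
  · rw [periodize, toIcoMod_apply_right, hga]
  · rw [periodize, (toIcoMod_eq_self hT).2 ⟨hx.1, hlt⟩]

theorem continuous_periodize [TopologicalSpace α] {g : ℝ → α}
    (hg : ContinuousOn g (Set.Icc a (a + T))) (hga : g a = g (a + T)) :
    Continuous (periodize hT a g) :=
  have : Fact (0 < T) := ⟨hT⟩
  (AddCircle.liftIco_continuous hga hg).comp (AddCircle.continuous_mk' T)

variable [NormedAddCommGroup E] [NormedSpace ℝ E]

theorem norm_sub_le_of_norm_deriv_right_le {f f' : ℝ → E} {C x y : ℝ} (hf : Continuous f)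
    (hf' : ∀ z, HasDerivWithinAt f (f' z) (Set.Ici z) z) (hC : ∀ z ∈ Set.uIcc x y, ‖f' z‖ ≤ C) :
    ‖f y - f x‖ ≤ C * |y - x| := by
  rcases le_total x y with hxy | hyx
  · rw [abs_of_nonneg (sub_nonneg.2 hxy)]
    exact norm_image_sub_le_of_norm_deriv_right_le_segment hf.continuousOn (fun z _ => hf' z)
      (fun z hz => hC z (Set.Icc_subset_uIcc (Set.Ico_subset_Icc_self hz))) y
      (Set.right_mem_Icc.2 hxy)
  · rw [norm_sub_rev, abs_sub_comm, abs_of_nonneg (sub_nonneg.2 hyx)]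
    exact norm_image_sub_le_of_norm_deriv_right_le_segment hf.continuousOn (fun z _ => hf' z)
      (fun z hz => hC z (Set.Icc_subset_uIcc' (Set.Ico_subset_Icc_self hz))) x
      (Set.right_mem_Icc.2 hyx)

variable {g : ℝ → E}

-- Only a right derivative exists at the points of `a + ℤT`, where the one-sided derivatives of the
-- extension may disagree.
theorem hasDerivWithinAt_periodize (hg : Differentiable ℝ g) (x : ℝ) :
    HasDerivWithinAt (periodize hT a g) (periodize hT a (deriv g) x) (Set.Ici x) x := by
  have hshift : HasDerivAt (fun y => g (y - toIcoDiv hT a x • T)) (deriv g (toIcoMod hT a x)) x :=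
    HasDerivAt.comp_sub_const x _ (hg _).hasDerivAt
  refine hshift.hasDerivWithinAt.congr_of_eventuallyEq ?_ rfl
  filter_upwards [eventuallyEq_toIcoDiv_nhdsGE hT a x] with y hy
  rw [periodize, toIcoMod, hy]

theorem norm_periodize_sub_le {C : ℝ} (hg : Differentiable ℝ g) (hga : g a = g (a + T))
    (hC : ∀ x ∈ Set.Icc a (a + T), ‖deriv g x‖ ≤ C) (x y : ℝ) :
    ‖periodize hT a g y - periodize hT a g x‖ ≤ C * |y - x| :=
  norm_sub_le_of_norm_deriv_right_le (continuous_periodize hT hg.continuous.continuousOn hga)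
    (hasDerivWithinAt_periodize hT hg)
    fun z _ => hC _ (Set.Ico_subset_Icc_self (toIcoMod_mem_Ico hT a z))

theorem norm_periodize_sub_sub_smul_le {C : ℝ} (hC0 : 0 ≤ C) (hg : Differentiable ℝ g)
    (hg' : Differentiable ℝ (deriv g)) (hga : g a = g (a + T))
    (hga' : deriv g a = deriv g (a + T))
    (hC : ∀ x ∈ Set.Icc a (a + T), ‖deriv (deriv g) x‖ ≤ C) (x y : ℝ) :
    ‖periodize hT a g y - periodize hT a g x - (y - x) • periodize hT a (deriv g) x‖ ≤
      C * (y - x) ^ 2 := by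
  set d := periodize hT a (deriv g) x
  have hcont : Continuous fun z => periodize hT a g z - (z - x) • d :=
    (continuous_periodize hT hg.continuous.continuousOn hga).sub (by fun_prop)
  have hderiv (z : ℝ) : HasDerivWithinAt (fun z => periodize hT a g z - (z - x) • d)
      (periodize hT a (deriv g) z - d) (Set.Ici z) z := by
    have hlinear : HasDerivWithinAt (fun z => (z - x) • d) d (Set.Ici z) z := by
      simpa only [one_smul] using ((hasDerivAt_id' z).hasDerivWithinAt.sub_const x).smul_const d
    exact (hasDerivWithinAt_periodize hT hg z).sub hlinear
  have hbound (z : ℝ) (hz : z ∈ Set.uIcc x y) :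
      ‖periodize hT a (deriv g) z - d‖ ≤ C * |y - x| :=
    (norm_periodize_sub_le hT hg' hga' hC x z).trans
      (mul_le_mul_of_nonneg_left (Set.abs_sub_left_of_mem_uIcc hz) hC0)
  calc ‖periodize hT a g y - periodize hT a g x - (y - x) • d‖
      = ‖periodize hT a g y - (y - x) • d - (periodize hT a g x - (x - x) • d)‖ := by
        rw [sub_self, zero_smul, sub_zero, sub_right_comm]
    _ ≤ C * |y - x| * |y - x| := norm_sub_le_of_norm_deriv_right_le hcont hderiv hbound
    _ = C * (y - x) ^ 2 := by rw [mul_assoc, abs_mul_abs_self, sq]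

theorem exists_norm_periodize_sub_sub_smul_le (hg : ContDiff ℝ 2 g) (hga : g a = g (a + T))
    (hga' : deriv g a = deriv g (a + T)) :
    ∃ C, 0 ≤ C ∧ ∀ x y : ℝ,
      ‖periodize hT a g y - periodize hT a g x - (y - x) • periodize hT a (deriv g) x‖ ≤
        C * (y - x) ^ 2 := by
  have hg' : ContDiff ℝ 1 (deriv g) := (contDiff_succ_iff_deriv.1 hg).2.2
  obtain ⟨C, hC⟩ := isCompact_Icc.exists_bound_of_continuousOn (s := Set.Icc a (a + T))
    (hg'.continuous_deriv le_rfl).continuousOn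
  have hC0 : 0 ≤ C := (norm_nonneg _).trans (hC a (Set.left_mem_Icc.2 (by linarith)))
  exact ⟨C, hC0, norm_periodize_sub_sub_smul_le hT hC0 (hg.differentiable two_ne_zero)
    (hg'.differentiable one_ne_zero) hga hga' hC⟩

end Periodization

section FourierSeries

open scoped Real
open MeasureTheory Complex

theorem summable_sq_norm_fourierCoeffOn {a b : ℝ} (hab : a < b) {f : ℝ → ℂ}
    (hf : ContinuousOn f (Set.Icc a b)) : Summable fun n => ‖fourierCoeffOn hab f n‖ ^ 2 := by
  obtain ⟨C, hC⟩ := isCompact_Icc.exists_bound_of_continuousOn hf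
  have hbound : ∀ᵐ x ∂volume.restrict (Set.Ioc a b), ‖f x‖ ≤ C :=
    ae_restrict_of_forall_mem measurableSet_Ioc fun x hx => hC x (Set.Ioc_subset_Icc_self hx)
  have hmeas : AEStronglyMeasurable f (volume.restrict (Set.Ioc a b)) :=
    (hf.mono Set.Ioc_subset_Icc_self).aestronglyMeasurable measurableSet_Ioc
  exact (hasSum_sq_fourierCoeffOn hab (MemLp.of_bound hmeas C hbound)).summable

theorem fourierCoeffOn_of_hasDerivAt_of_eq {a b : ℝ} (hab : a < b) {f f' : ℝ → ℂ}
    (hf : ∀ x ∈ Set.uIcc a b, HasDerivAt f (f' x) x) (hf' : IntervalIntegrable f' volume a b)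
    (hfab : f a = f b) (n : ℤ) :
    fourierCoeffOn hab f' n = 2 * π * I * n / (b - a) * fourierCoeffOn hab f n := by
  rcases eq_or_ne n 0 with rfl | hn
  · simp [fourierCoeffOn_eq_integral, intervalIntegral.integral_eq_sub_of_hasDerivAt hf hf', hfab]
  · have hba : (b : ℂ) - a ≠ 0 := sub_ne_zero.2 (by exact_mod_cast hab.ne')
    have hn' : (n : ℂ) ≠ 0 := Int.cast_ne_zero.2 hn
    have hπ : (π : ℂ) ≠ 0 := ofReal_ne_zero.2 Real.pi_ne_zero
    rw [fourierCoeffOn_of_hasDerivAt hab hn hf hf', hfab, sub_self]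
    field_simp
    ring

theorem periodic_deriv {E : Type*} [NormedAddCommGroup E] [NormedSpace ℝ E] {f : ℝ → E} {T : ℝ}
    (hf : Function.Periodic f T) : Function.Periodic (deriv f) T := fun x => by
  rw [← deriv_comp_add_const, hf.funext]

theorem fourierCoeffOn_deriv {T : ℝ} (hT : 0 < T) {f : ℝ → ℂ} (hper : Function.Periodic f T)
    (hf : ContDiff ℝ 1 f) (n : ℤ) :
    fourierCoeffOn hT (deriv f) n = 2 * π * I * n / T * fourierCoeffOn hT f n := by
  simpa using fourierCoeffOn_of_hasDerivAt_of_eq hT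
    (fun x _ => (hf.differentiable one_ne_zero x).hasDerivAt)
    ((hf.continuous_deriv le_rfl).intervalIntegrable _ _) hper.eq.symm n

variable {T : ℝ} (hT : 0 < T) {f : ℝ → ℂ}

theorem abs_mul_norm_fourierCoeffOn (hper : Function.Periodic f T)
    (hf : ContDiff ℝ 1 f) (n : ℤ) :
    |(n : ℝ)| * ‖fourierCoeffOn hT f n‖ = T / (2 * π) * ‖fourierCoeffOn hT (deriv f) n‖ := by
  have hnorm : ‖(2 * π * I * n / T : ℂ)‖ = 2 * π * |(n : ℝ)| / T := by
    simp [abs_of_pos hT, abs_of_pos Real.pi_pos]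
  rw [fourierCoeffOn_deriv hT hper hf, norm_mul, hnorm]
  field_simp

theorem summable_norm_fourierCoeffOn (hper : Function.Periodic f T) (hf : ContDiff ℝ 1 f) :
    Summable fun n => ‖fourierCoeffOn hT f n‖ := by
  have hinv : Summable fun n : ℤ => 1 / (n : ℝ) ^ 2 := Real.summable_one_div_int_pow.2 one_lt_two
  have hderiv := summable_sq_norm_fourierCoeffOn hT (hf.continuous_deriv le_rfl).continuousOn
  refine ((hderiv.mul_left ((T / (2 * π)) ^ 2)).add hinv).of_norm_bounded_eventually ?_
  filter_upwards [(Set.finite_singleton (0 : ℤ)).compl_mem_cofinite] with n hn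
  have hn' : |(n : ℝ)| ≠ 0 := abs_ne_zero.2 (Int.cast_ne_zero.2 hn)
  rw [norm_norm, ← mul_pow, ← abs_mul_norm_fourierCoeffOn hT hper hf, ← sq_abs (n : ℝ),
    ← one_div_pow]
  calc ‖fourierCoeffOn hT f n‖
      = |(n : ℝ)| * ‖fourierCoeffOn hT f n‖ * (1 / |(n : ℝ)|) := by field_simp
    _ ≤ (|(n : ℝ)| * ‖fourierCoeffOn hT f n‖) ^ 2 + (1 / |(n : ℝ)|) ^ 2 := by
      nlinarith [two_mul_le_add_sq (|(n : ℝ)| * ‖fourierCoeffOn hT f n‖) (1 / |(n : ℝ)|),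
        sq_nonneg (|(n : ℝ)| * ‖fourierCoeffOn hT f n‖), sq_nonneg (1 / |(n : ℝ)|)]

theorem summable_abs_pow_mul_norm_fourierCoeffOn (p : ℕ) (hper : Function.Periodic f T)
    (hf : ContDiff ℝ (p + 1) f) :
    Summable fun n : ℤ => |(n : ℝ)| ^ p * ‖fourierCoeffOn hT f n‖ := by
  induction p generalizing f with
  | zero => simpa using summable_norm_fourierCoeffOn hT hper (by simpa using hf)
  | succ p ih =>
    have hf' : ContDiff ℝ (p + 1) (deriv f) := (contDiff_succ_iff_deriv.1 (mod_cast hf)).2.2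
    have hf1 : ContDiff ℝ 1 f := hf.of_le le_add_self
    refine ((ih (periodic_deriv hper) hf').mul_left (T / (2 * π))).congr fun n => ?_
    rw [mul_left_comm, ← abs_mul_norm_fourierCoeffOn hT hper hf1, pow_succ, mul_assoc]

theorem summable_sq_mul_norm_fourierCoeffOn (hper : Function.Periodic f T)
    (hf : ContDiff ℝ 3 f) : Summable fun n : ℤ => (n : ℝ) ^ 2 * ‖fourierCoeffOn hT f n‖ := by
  simpa only [sq_abs] using
    summable_abs_pow_mul_norm_fourierCoeffOn hT 2 hper (hf.of_le (by norm_num))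

theorem hasSum_fourierCoeffOn_mul_exp (hper : Function.Periodic f T) (hf : Continuous f)
    (hs : Summable fun n => ‖fourierCoeffOn hT f n‖) (x : ℝ) :
    HasSum (fun n : ℤ => fourierCoeffOn hT f n * exp (2 * π * I * n * x / T)) (f x) := by
  have : Fact (0 < T) := ⟨hT⟩
  let F : C(AddCircle T, ℂ) := ⟨hper.lift, continuous_coinduced_dom.2 hf⟩
  have hcoeff : fourierCoeff F = fourierCoeffOn hT f := funext fun n => by
    rw [fourierCoeffOn_eq_integral, fourierCoeff_eq_intervalIntegral _ _ 0, sub_zero, zero_add]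
    rfl
  have hF : Summable (fourierCoeff F) := hcoeff ▸ hs.of_norm
  have hsum := has_pointwise_sum_fourier_series_of_summable hF x
  simp only [hcoeff, fourier_coe_apply, smul_eq_mul] at hsum
  exact hsum

theorem hasSum_fourierCoeffOn_two_pi (hper : Function.Periodic f (2 * π)) (hf : ContDiff ℝ 1 f)
    (x : ℝ) :
    HasSum (fun n : ℤ => fourierCoeffOn Real.two_pi_pos f n * exp (I * n * x)) (f x) := by
  have harg (n : ℤ) : 2 * π * I * n * x / ((2 * π : ℝ) : ℂ) = I * n * x := by
    have hpi : (π : ℂ) ≠ 0 := ofReal_ne_zero.2 Real.pi_ne_zero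
    push_cast
    field_simp
  simpa only [harg] using hasSum_fourierCoeffOn_mul_exp Real.two_pi_pos hper hf.continuous
    (summable_norm_fourierCoeffOn Real.two_pi_pos hper hf) x

theorem summable_abs_mul_of_summable_sq_mul {a : ℤ → ℝ} (ha : ∀ n, 0 ≤ a n)
    (h : Summable fun n : ℤ => (n : ℝ) ^ 2 * a n) : Summable fun n : ℤ => |(n : ℝ)| * a n :=
  h.of_nonneg_of_le (fun n => mul_nonneg (abs_nonneg _) (ha n)) fun n =>
    mul_le_mul_of_nonneg_right
      (by rw [← sq_abs]; exact_mod_cast Int.le_self_sq |n|) (ha n)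

theorem hasDerivAt_const_mul_exp (a : ℂ) (m : ℤ) (x : ℝ) :
    HasDerivAt (fun x : ℝ => a * exp (I * m * x)) (I * m * (a * exp (I * m * x))) x := by
  have harg : HasDerivAt (fun x : ℝ => I * m * (x : ℂ)) (I * m) x := by
    simpa using (hasDerivAt_id x).ofReal_comp.const_mul (I * m)
  exact (harg.cexp.const_mul a).congr_deriv (by ring)

theorem norm_exp_I_mul_intCast_mul_ofReal (m : ℤ) (x : ℝ) : ‖exp (I * m * x)‖ = 1 := by
  have harg : I * m * x = ((m * x : ℝ) : ℂ) * I := by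
    push_cast
    ring
  rw [harg, norm_exp_ofReal_mul_I]

theorem hasSum_deriv_of_hasSum_fourier {c : ℤ → ℂ}
    (hc : Summable fun m : ℤ => |(m : ℝ)| * ‖c m‖)
    (hf : ∀ x : ℝ, HasSum (fun m : ℤ => c m * exp (I * m * x)) (f x)) (x : ℝ) :
    HasSum (fun m : ℤ => deriv (fun x : ℝ => c m * exp (I * m * x)) x) (deriv f x) := by
  have hbound (m : ℤ) (y : ℝ) : ‖I * m * (c m * exp (I * m * y))‖ ≤ |(m : ℝ)| * ‖c m‖ := by
    simp only [norm_mul, norm_I, one_mul, norm_intCast, norm_exp_I_mul_intCast_mul_ofReal,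
      mul_one, le_refl]
  have hderiv := hasDerivAt_tsum hc (fun m y => hasDerivAt_const_mul_exp (c m) m y) hbound
    (hf 0).summable x
  rw [funext fun y => (hf y).tsum_eq] at hderiv
  simp only [(hasDerivAt_const_mul_exp _ _ x).deriv, hderiv.deriv]
  exact (hc.of_norm_bounded fun m => hbound m x).hasSum

end FourierSeries

section Grid

theorem hgrid_pos {N : ℤ} (hN : 0 < N) : 0 < hgrid N :=
  div_pos Real.two_pi_pos (Int.cast_pos.2 hN)

theorem intCast_mul_hgrid {N : ℤ} (hN : 0 < N) : N * hgrid N = 2 * Real.pi :=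
  mul_div_cancel₀ _ (Int.cast_ne_zero.2 hN.ne')

theorem hgrid_le_two_pi {N : ℤ} (hN : 0 < N) : hgrid N ≤ 2 * Real.pi :=
  div_le_self Real.two_pi_pos.le (by exact_mod_cast Int.add_one_le_of_lt hN)

theorem gridPt_add (N j m : ℤ) : gridPt N (j + m) = gridPt N j + m * hgrid N := by
  rw [gridPt, Int.cast_add, add_mul, gridPt]

theorem idxs_two_mul (M : ℤ) : idxs (2 * M) = Finset.Icc (-M + 1) M := by
  simp only [idxs, Int.mul_ediv_cancel_left _ two_ne_zero]

theorem zero_mem_idxs {N : ℤ} (hN : 0 < N) (hev : Even N) : 0 ∈ idxs N := by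
  obtain ⟨M, rfl⟩ := hev.two_dvd
  rw [idxs_two_mul, Finset.mem_Icc]
  omega

theorem card_idxs {N : ℤ} (hN : 0 < N) (hev : Even N) : ((idxs N).card : ℤ) = N := by
  obtain ⟨M, rfl⟩ := hev.two_dvd
  rw [idxs_two_mul, Int.card_Icc]
  omega

theorem eq_of_dvd_sub_of_mem_idxs {N k l : ℤ} (hev : Even N) (hk : k ∈ idxs N) (hl : l ∈ idxs N)
    (hdvd : N ∣ k - l) : k = l := by
  obtain ⟨M, rfl⟩ := hev.two_dvd
  rw [idxs_two_mul, Finset.mem_Icc] at hk hl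
  exact sub_eq_zero.1 (Int.eq_zero_of_abs_lt_dvd hdvd (abs_lt.2 (by omega)))

theorem gridPt_mem_Icc {N k : ℤ} (hN : 0 < N) (hev : Even N) (hk : k ∈ idxs N) :
    gridPt N k ∈ Set.Icc (-Real.pi) Real.pi := by
  obtain ⟨M, rfl⟩ := hev.two_dvd
  have hpi : M * hgrid (2 * M) = Real.pi := by
    have := intCast_mul_hgrid hN
    push_cast at this
    linarith
  rw [idxs_two_mul, Finset.mem_Icc] at hk
  have hlower : -(M : ℝ) ≤ k := by exact_mod_cast (by omega : -M ≤ k)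
  have hupper : (k : ℝ) ≤ M := by exact_mod_cast hk.2
  rw [← hpi, ← neg_mul]
  exact ⟨mul_le_mul_of_nonneg_right hlower (hgrid_pos hN).le,
    mul_le_mul_of_nonneg_right hupper (hgrid_pos hN).le⟩

theorem abs_le_pi_div_hgrid {N k : ℤ} (hN : 0 < N) (hev : Even N) (hk : k ∈ idxs N) :
    |(k : ℝ)| ≤ Real.pi / hgrid N := by
  have hh := hgrid_pos hN
  rw [le_div_iff₀ hh, ← abs_of_pos hh, ← abs_mul]
  exact abs_le.2 (gridPt_mem_Icc hN hev hk)

variable {E : Type*} [AddCommGroup E] {F : ℤ → E}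

theorem sum_Icc_add_one_of_eq {a b : ℤ} (hab : a ≤ b) (hF : F (b + 1) = F a) :
    ∑ k ∈ Finset.Icc a b, F (k + 1) = ∑ k ∈ Finset.Icc a b, F k :=
  calc ∑ k ∈ Finset.Icc a b, F (k + 1)
      = ∑ k ∈ Finset.Icc (a + 1) (b + 1), F k := by
        rw [← Finset.map_add_right_Icc, Finset.sum_map]
        rfl
    _ = F (b + 1) + ∑ k ∈ Finset.Icc (a + 1) b, F k := by
        rw [← Finset.insert_Icc_right_eq_Icc_add_one (by omega), Finset.sum_insert (by simp)]
    _ = ∑ k ∈ Finset.Icc a b, F k := by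
        rw [hF, ← Finset.insert_Icc_add_one_left_eq_Icc hab, Finset.sum_insert (by simp)]

theorem sum_idxs_add_one {N : ℤ} (hN : 0 < N) (hev : Even N) (hF : Function.Periodic F N) :
    ∑ k ∈ idxs N, F (k + 1) = ∑ k ∈ idxs N, F k := by
  obtain ⟨M, rfl⟩ := hev.two_dvd
  rw [idxs_two_mul]
  refine sum_Icc_add_one_of_eq (by omega) ?_
  rw [← hF (-M + 1)]
  congr 1
  ring

theorem sum_idxs_add {N : ℤ} (hN : 0 < N) (hev : Even N) (hF : Function.Periodic F N) (m : ℤ) :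
    ∑ k ∈ idxs N, F (k + m) = ∑ k ∈ idxs N, F k := by
  have hstep (m : ℤ) : ∑ k ∈ idxs N, F (k + (m + 1)) = ∑ k ∈ idxs N, F (k + m) := by
    simpa only [add_right_comm, ← add_assoc] using sum_idxs_add_one hN hev (hF.add_const m)
  induction m using Int.induction_on with
  | zero => simp only [add_zero]
  | succ n ih => rw [hstep, ih]
  | pred n ih => rw [← hstep, sub_add_cancel, ih]

end Grid

section DiscreteFourier

/-- The exponential `e^{ikα}` sampled at the grid points. -/
def mode (N k j : ℤ) : ℂ := Complex.exp (Complex.I * k * gridPt N j)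

theorem mode_add_left (N k l j : ℤ) : mode N (k + l) j = mode N k j * mode N l j := by
  rw [mode, mode, mode, ← Complex.exp_add, Int.cast_add, mul_add, add_mul]

theorem mode_comm (N k j : ℤ) : mode N k j = mode N j k := by
  rw [mode, mode, gridPt, gridPt]
  push_cast
  ring_nf

theorem mode_add_right (N k i j : ℤ) : mode N k (i + j) = mode N k i * mode N k j := by
  simp only [mode_comm N k, mode_add_left]

theorem mode_zero_left (N j : ℤ) : mode N 0 j = 1 := by
  simp only [mode, Int.cast_zero, mul_zero, zero_mul, Complex.exp_zero]

theorem mode_period {N : ℤ} (hN : 0 < N) (j : ℤ) : mode N N j = 1 := by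
  have hh : (N : ℂ) * hgrid N = 2 * Real.pi := by exact_mod_cast intCast_mul_hgrid hN
  refine Complex.exp_eq_one_iff.2 ⟨j, ?_⟩
  rw [gridPt, Complex.ofReal_mul, Complex.ofReal_intCast]
  linear_combination Complex.I * j * hh

theorem mode_left_periodic {N : ℤ} (hN : 0 < N) (j : ℤ) :
    Function.Periodic (mode N · j) N := fun k => by
  simp only [mode_add_left, mode_period hN, mul_one]

theorem norm_mode (N k j : ℤ) : ‖mode N k j‖ = 1 :=
  norm_exp_I_mul_intCast_mul_ofReal k (gridPt N j)

theorem conj_mode (N k j : ℤ) : (starRingEnd ℂ) (mode N k j) = mode N (-k) j := by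
  rw [mode, mode, ← Complex.exp_conj, map_mul, map_mul, Complex.conj_I, Complex.conj_ofReal,
    map_intCast, Int.cast_neg, neg_mul, mul_neg]

theorem mode_one_right_eq_one_iff {N m : ℤ} (hN : 0 < N) : mode N m 1 = 1 ↔ N ∣ m := by
  have hN' : (N : ℂ) ≠ 0 := Int.cast_ne_zero.2 hN.ne'
  have hpi : (Real.pi : ℂ) ≠ 0 := Complex.ofReal_ne_zero.2 Real.pi_ne_zero
  rw [mode, Complex.exp_eq_one_iff]
  refine exists_congr fun n => ?_
  rw [← Int.cast_inj (α := ℂ), gridPt, hgrid]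
  push_cast
  field_simp

theorem dft_eq_sum_mode (N : ℤ) (w : ℤ → ℂ) (k : ℤ) :
    dft N w k = (N : ℂ)⁻¹ * ∑ j ∈ idxs N, w j * mode N (-k) j := by
  simp only [dft, mode, Int.cast_neg, mul_neg, neg_mul]

theorem idft_eq_sum_mode (N : ℤ) (c : ℤ → ℂ) (j : ℤ) :
    idft N c j = ∑ k ∈ idxs N, c k * mode N k j := rfl

theorem dft_periodic {N : ℤ} (hN : 0 < N) (w : ℤ → ℂ) : Function.Periodic (dft N w) N :=
  fun k => by
    simp only [dft_eq_sum_mode, neg_add, ← sub_eq_add_neg, (mode_left_periodic hN _).sub_eq]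

theorem dft_mode_mul (N m : ℤ) (w : ℤ → ℂ) (k : ℤ) :
    dft N (mode N m * w) k = dft N w (k - m) := by
  simp only [dft_eq_sum_mode, Pi.mul_apply, neg_sub, sub_eq_add_neg m, mode_add_left, mul_left_comm,
    mul_assoc]

theorem dft_const_smul (N : ℤ) (a : ℂ) (w : ℤ → ℂ) : dft N (a • w) = a • dft N w := by
  funext k
  simp only [dft, Pi.smul_apply, smul_eq_mul, mul_assoc, Finset.mul_sum, mul_left_comm a]

theorem hasSum_dft {ι : Type*} (N : ℤ) {u : ι → ℤ → ℂ} {w : ℤ → ℂ} (hu : HasSum u w) :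
    HasSum (fun m => dft N (u m)) (dft N w) :=
  Pi.hasSum.2 fun _ => (hasSum_sum fun j _ => (Pi.hasSum.1 hu j).mul_right _).mul_left _

theorem hasSum_idft {ι : Type*} (N : ℤ) {u : ι → ℤ → ℂ} {c : ℤ → ℂ} (hu : HasSum u c) :
    HasSum (fun m => idft N (u m)) (idft N c) :=
  Pi.hasSum.2 fun _ => hasSum_sum fun k _ => (Pi.hasSum.1 hu k).mul_right _

theorem sum_mode_eq_zero {N m : ℤ} (hN : 0 < N) (hev : Even N) (hm : ¬N ∣ m) :
    ∑ j ∈ idxs N, mode N m j = 0 := by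
  have hper : Function.Periodic (mode N m) N := fun j => by
    rw [mode_add_right, mode_comm N m N, mode_period hN, mul_one]
  have hshift := sum_idxs_add_one hN hev hper
  simp only [mode_add_right, ← Finset.sum_mul] at hshift
  by_contra hsum
  have hmode : mode N m 1 = 1 := mul_left_cancel₀ hsum (hshift.trans (mul_one _).symm)
  exact hm ((mode_one_right_eq_one_iff hN).1 hmode)

theorem sum_mode_sub {N k l : ℤ} (hN : 0 < N) (hev : Even N) (hk : k ∈ idxs N)
    (hl : l ∈ idxs N) : ∑ j ∈ idxs N, mode N (k - l) j = if k = l then (N : ℂ) else 0 := by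
  split_ifs with hkl
  · simp only [hkl, sub_self, mode_zero_left, Finset.sum_const, nsmul_one]
    exact_mod_cast card_idxs hN hev
  · exact sum_mode_eq_zero hN hev (mt (eq_of_dvd_sub_of_mem_idxs hev hk hl) hkl)

theorem idft_mul_conj_idft (N : ℤ) (c : ℤ → ℂ) (j : ℤ) :
    idft N c j * (starRingEnd ℂ) (idft N c j) =
      ∑ k ∈ idxs N, ∑ l ∈ idxs N, c k * (starRingEnd ℂ) (c l) * mode N (k - l) j := by
  simp only [idft_eq_sum_mode, map_sum, Finset.sum_mul_sum, map_mul, conj_mode, sub_eq_add_neg,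
    mode_add_left, mul_mul_mul_comm]

theorem sum_norm_sq_idft {N : ℤ} (hN : 0 < N) (hev : Even N) (c : ℤ → ℂ) :
    ∑ j ∈ idxs N, ‖idft N c j‖ ^ 2 = N * ∑ k ∈ idxs N, ‖c k‖ ^ 2 := by
  suffices h : ∑ j ∈ idxs N, idft N c j * (starRingEnd ℂ) (idft N c j) =
      N * ∑ k ∈ idxs N, c k * (starRingEnd ℂ) (c k) by
    simp only [Complex.mul_conj'] at h
    exact_mod_cast h
  calc ∑ j ∈ idxs N, idft N c j * (starRingEnd ℂ) (idft N c j)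
      = ∑ k ∈ idxs N, ∑ l ∈ idxs N,
          c k * (starRingEnd ℂ) (c l) * ∑ j ∈ idxs N, mode N (k - l) j := by
        simp only [idft_mul_conj_idft, Finset.mul_sum]
        rw [Finset.sum_comm]
        exact Finset.sum_congr rfl fun k _ => Finset.sum_comm
    _ = ∑ k ∈ idxs N, ∑ l ∈ idxs N, c k * (starRingEnd ℂ) (c l) * if k = l then (N : ℂ) else 0 :=
        Finset.sum_congr rfl fun k hk => Finset.sum_congr rfl fun l hl => by
          rw [sum_mode_sub hN hev hk hl]
    _ = ∑ k ∈ idxs N, c k * (starRingEnd ℂ) (c k) * N :=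
        Finset.sum_congr rfl fun k hk => by
          simp only [mul_ite, mul_zero, Finset.sum_ite_eq, hk, if_true]
    _ = N * ∑ k ∈ idxs N, c k * (starRingEnd ℂ) (c k) := by rw [← Finset.sum_mul, mul_comm]

theorem conj_dft (N : ℤ) (w : ℤ → ℂ) (k : ℤ) :
    (starRingEnd ℂ) (dft N w k) = (N : ℂ)⁻¹ * idft N (fun j => (starRingEnd ℂ) (w j)) k := by
  simp only [dft_eq_sum_mode, idft_eq_sum_mode, map_mul, map_sum, map_inv₀, map_intCast, conj_mode,
    neg_neg, mode_comm N k]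

theorem sum_norm_sq_dft {N : ℤ} (hN : 0 < N) (hev : Even N) (w : ℤ → ℂ) :
    N * ∑ k ∈ idxs N, ‖dft N w k‖ ^ 2 = ∑ j ∈ idxs N, ‖w j‖ ^ 2 := by
  have hN' : (N : ℝ) ≠ 0 := Int.cast_ne_zero.2 hN.ne'
  have hnorm (k : ℤ) : ‖dft N w k‖ ^ 2 =
      ((N : ℝ)⁻¹) ^ 2 * ‖idft N (fun j => (starRingEnd ℂ) (w j)) k‖ ^ 2 := by
    rw [← Complex.norm_conj, conj_dft, norm_mul, mul_pow, norm_inv, Complex.norm_intCast, inv_pow,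
      sq_abs, inv_pow]
  simp only [hnorm, ← Finset.mul_sum, sum_norm_sq_idft hN hev, Complex.norm_conj]
  field_simp

end DiscreteFourier

section Multiplier

/-- The Fourier multiplier with symbol `a`, the common form of `S_h`, `D_h` and `w ↦ w^q`; only the
values of `a` on `idxs N` enter. -/
def multiplier (N : ℤ) (a w : ℤ → ℂ) : ℤ → ℂ := idft N fun k => a k * dft N w k

theorem multiplier_congr {N : ℤ} {a b : ℤ → ℂ} (hab : ∀ k ∈ idxs N, a k = b k) :
    multiplier N a = multiplier N b := by
  funext w j
  simp only [multiplier, idft]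
  exact Finset.sum_congr rfl fun k hk => by rw [hab k hk]

theorem multiplier_sub (N : ℤ) (a b w : ℤ → ℂ) :
    multiplier N (a - b) w = multiplier N a w - multiplier N b w := by
  funext j
  simp only [multiplier, idft, Pi.sub_apply, sub_mul, Finset.sum_sub_distrib]

theorem multiplier_smul (N : ℤ) (s : ℂ) (a w : ℤ → ℂ) :
    multiplier N (s • a) w = s • multiplier N a w := by
  funext j
  simp only [multiplier, idft, Pi.smul_apply, smul_eq_mul, mul_assoc, Finset.mul_sum]

theorem multiplier_const_smul (N : ℤ) (s : ℂ) (a w : ℤ → ℂ) :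
    multiplier N a (s • w) = s • multiplier N a w := by
  funext j
  simp only [multiplier, idft, dft_const_smul, Pi.smul_apply, smul_eq_mul, mul_assoc,
    Finset.mul_sum, mul_left_comm s]

theorem multiplier_mode_mul {N : ℤ} (hN : 0 < N) (hev : Even N) {a : ℤ → ℂ}
    (ha : Function.Periodic a N) (m : ℤ) (w : ℤ → ℂ) :
    multiplier N a (mode N m * w) = mode N m * multiplier N (fun k => a (k + m)) w := by
  funext j
  have hper : Function.Periodic (fun k => a k * dft N w (k - m) * mode N k j) N :=
    (ha.mul ((dft_periodic hN w).sub_const m)).mul (mode_left_periodic hN j)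
  simp only [multiplier, idft_eq_sum_mode, dft_mode_mul, Pi.mul_apply, Finset.mul_sum]
  rw [← sum_idxs_add hN hev hper m]
  exact Finset.sum_congr rfl fun k _ => by rw [add_sub_cancel_right, mode_add_left]; ring

theorem hasSum_multiplier {ι : Type*} (N : ℤ) (a : ℤ → ℂ) {u : ι → ℤ → ℂ} {w : ℤ → ℂ}
    (hu : HasSum u w) : HasSum (fun m => multiplier N a (u m)) (multiplier N a w) :=
  hasSum_idft N (Pi.hasSum.2 fun k => (Pi.hasSum.1 (hasSum_dft N hu) k).mul_left (a k))

theorem l2norm_multiplier_le {N : ℤ} (hN : 0 < N) (hev : Even N) {a : ℤ → ℂ} {B : ℝ}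
    (ha : ∀ k ∈ idxs N, ‖a k‖ ≤ B) (w : ℤ → ℂ) :
    l2norm N (multiplier N a w) ≤ B * l2norm N w := by
  have hh := hgrid_pos hN
  have hB : 0 ≤ B := (norm_nonneg _).trans (ha 0 (zero_mem_idxs hN hev))
  refine Real.sqrt_le_iff.2 ⟨mul_nonneg hB (Real.sqrt_nonneg _), ?_⟩
  rw [mul_pow, l2norm, Real.sq_sqrt (by positivity)]
  calc hgrid N * ∑ j ∈ idxs N, ‖multiplier N a w j‖ ^ 2
      = hgrid N * (N * ∑ k ∈ idxs N, ‖a k‖ ^ 2 * ‖dft N w k‖ ^ 2) := by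
        simp only [multiplier, sum_norm_sq_idft hN hev, norm_mul, mul_pow]
    _ ≤ hgrid N * (N * ∑ k ∈ idxs N, B ^ 2 * ‖dft N w k‖ ^ 2) := by
        gcongr with k hk
        exact ha k hk
    _ = B ^ 2 * (hgrid N * ∑ j ∈ idxs N, ‖w j‖ ^ 2) := by
        rw [← Finset.mul_sum, ← sum_norm_sq_dft hN hev w]
        ring

theorem l2norm_multiplier_le_div_hgrid {N : ℤ} (hN : 0 < N) (hev : Even N) {a : ℤ → ℂ} {R : ℝ}
    (hR : 0 ≤ R) (ha : ∀ k ∈ idxs N, ‖a k‖ ≤ R * |(k : ℝ)|) (w : ℤ → ℂ) :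
    l2norm N (multiplier N a w) ≤ R * Real.pi / hgrid N * l2norm N w := by
  refine l2norm_multiplier_le hN hev (fun k hk => (ha k hk).trans ?_) w
  rw [mul_div_assoc]
  exact mul_le_mul_of_nonneg_left (abs_le_pi_div_hgrid hN hev hk) hR

end Multiplier

section DiscreteNorm

/-- The linear map into the Euclidean space over `idxs N` that turns `l2norm N` into its norm; it
forgets the values of `w` off `idxs N`. -/
def gridEmbedding (N : ℤ) : (ℤ → ℂ) →L[ℂ] EuclideanSpace ℂ (idxs N) :=
  (EuclideanSpace.equiv (idxs N) ℂ).symm.toContinuousLinearMap.comp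
    (ContinuousLinearMap.pi fun j : idxs N =>
      (√(hgrid N) : ℂ) • ContinuousLinearMap.proj (R := ℂ) (φ := fun _ => ℂ) (j : ℤ))

theorem norm_gridEmbedding {N : ℤ} (hN : 0 < N) (w : ℤ → ℂ) :
    ‖gridEmbedding N w‖ = l2norm N w := by
  have happly (j : idxs N) : ‖gridEmbedding N w j‖ ^ 2 = hgrid N * ‖w j‖ ^ 2 := by
    change ‖(√(hgrid N) : ℂ) * w j‖ ^ 2 = _
    rw [norm_mul, mul_pow, Complex.norm_real, Real.norm_eq_abs, sq_abs,
      Real.sq_sqrt (hgrid_pos hN).le]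
  rw [EuclideanSpace.norm_eq, l2norm, Finset.mul_sum, ← Finset.sum_coe_sort (idxs N)]
  simp only [happly]

theorem l2norm_const_smul {N : ℤ} (hN : 0 < N) (s : ℂ) (w : ℤ → ℂ) :
    l2norm N (s • w) = ‖s‖ * l2norm N w := by
  rw [← norm_gridEmbedding hN, map_smul, norm_smul, norm_gridEmbedding hN]

theorem l2norm_mode_mul (N m : ℤ) (w : ℤ → ℂ) : l2norm N (mode N m * w) = l2norm N w := by
  simp only [l2norm, Pi.mul_apply, norm_mul, norm_mode, one_mul]

theorem l2norm_le_of_hasSum {ι : Type*} {N : ℤ} (hN : 0 < N) {u : ι → ℤ → ℂ} {w : ℤ → ℂ}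
    {B : ι → ℝ} {b : ℝ} (hu : HasSum u w) (hB : ∀ m, l2norm N (u m) ≤ B m) (hb : HasSum B b) :
    l2norm N w ≤ b := by
  rw [← norm_gridEmbedding hN]
  exact ((gridEmbedding N).hasSum hu).norm_le_of_bounded hb
    fun m => (norm_gridEmbedding hN _).trans_le (hB m)

theorem l2norm_iterate_le {N : ℤ} (hN : 0 < N) {S : (ℤ → ℂ) → ℤ → ℂ} {B : ℝ}
    (hB : 2 * Real.pi ≤ B) (hS : ∀ w, l2norm N (S w) ≤ B / hgrid N * l2norm N w) {k : ℕ}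
    (hk : k ≤ 1) (w : ℤ → ℂ) : l2norm N (S^[k] w) ≤ B / hgrid N * l2norm N w := by
  rcases Nat.le_one_iff_eq_zero_or_eq_one.1 hk with rfl | rfl
  · exact le_mul_of_one_le_left (Real.sqrt_nonneg _)
      ((one_le_div (hgrid_pos hN)).2 ((hgrid_le_two_pi hN).trans hB))
  · exact hS w

end DiscreteNorm

section Derivatives

theorem Sh_eq_multiplier (N : ℤ) :
    Sh N = multiplier N fun k => if k = N / 2 then 0 else Complex.I * k := by
  funext w
  simp only [Sh, multiplier, ite_mul, zero_mul]

theorem l2norm_Sh_le {N : ℤ} (hN : 0 < N) (hev : Even N) (w : ℤ → ℂ) :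
    l2norm N (Sh N w) ≤ Real.pi / hgrid N * l2norm N w := by
  rw [Sh_eq_multiplier, ← one_mul Real.pi]
  refine l2norm_multiplier_le_div_hgrid hN hev zero_le_one (fun k _ => ?_) w
  split_ifs
  · rw [norm_zero, one_mul]
    exact abs_nonneg _
  · rw [norm_mul, Complex.norm_I, Complex.norm_intCast]

theorem Dh_eq_multiplier (N : ℤ) (ρ : ℝ → ℝ) :
    Dh N ρ = multiplier N fun k => Complex.I * k * ρ (gridPt N k) := rfl

theorem exists_l2norm_Dh_le {ρ : ℝ → ℝ} (hρ : ContinuousOn ρ (Set.Icc (-Real.pi) Real.pi)) :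
    ∃ R, ∀ N : ℤ, 0 < N → Even N → ∀ w : ℤ → ℂ,
      l2norm N (Dh N ρ w) ≤ R * Real.pi / hgrid N * l2norm N w := by
  obtain ⟨R, hR⟩ := isCompact_Icc.exists_bound_of_continuousOn hρ
  have hR0 : 0 ≤ R := (norm_nonneg _).trans (hR 0 ⟨by linarith [Real.pi_pos], Real.pi_pos.le⟩)
  refine ⟨R, fun N hN hev w => ?_⟩
  rw [Dh_eq_multiplier]
  refine l2norm_multiplier_le_div_hgrid hN hev hR0 (fun k hk => ?_) w
  rw [norm_mul, norm_mul, Complex.norm_I, one_mul, Complex.norm_intCast, Complex.norm_real,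
    mul_comm]
  exact mul_le_mul_of_nonneg_right (hR _ (gridPt_mem_Icc hN hev hk)) (abs_nonneg _)

theorem exists_l2norm_iterate_le {ρ : ℝ → ℝ}
    (hρ : ContinuousOn ρ (Set.Icc (-Real.pi) Real.pi)) :
    ∃ B, 0 ≤ B ∧ ∀ N : ℤ, 0 < N → Even N → ∀ k ≤ 1, ∀ w : ℤ → ℂ,
      l2norm N ((Dh N ρ)^[k] w) ≤ B / hgrid N * l2norm N w ∧
      l2norm N ((Sh N)^[k] w) ≤ B / hgrid N * l2norm N w := by
  obtain ⟨R, hR⟩ := exists_l2norm_Dh_le hρ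
  have hB : 2 * Real.pi ≤ max 2 R * Real.pi :=
    mul_le_mul_of_nonneg_right (le_max_left 2 R) Real.pi_pos.le
  refine ⟨max 2 R * Real.pi, Real.two_pi_pos.le.trans hB, fun N hN hev k hk w =>
    ⟨l2norm_iterate_le hN hB (fun v => (hR N hN hev v).trans ?_) hk w,
      l2norm_iterate_le hN hB (fun v => (l2norm_Sh_le hN hev v).trans ?_) hk w⟩⟩
  all_goals
    have hh := hgrid_pos hN
    have hv : 0 ≤ l2norm N v := Real.sqrt_nonneg _
    gcongr
  · exact le_max_right 2 R
  · linarith [Real.pi_pos]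

/-- The `2π`-periodic function that equals `x ρ(x)` on `[-π, π)`, from which the symbol of `D_h` is
sampled. -/
def dhProfile (ρ : ℝ → ℝ) : ℝ → ℝ := periodize Real.two_pi_pos (-Real.pi) fun x => x * ρ x

theorem dhProfile_eq {ρ : ℝ → ℝ} (hρπ : ρ (-Real.pi) = -ρ Real.pi) {x : ℝ}
    (hx : x ∈ Set.Icc (-Real.pi) Real.pi) : dhProfile ρ x = x * ρ x := by
  have hpi : -Real.pi + 2 * Real.pi = Real.pi := by ring
  exact periodize_eq_self _ (by rw [hpi, hρπ, neg_mul_neg]) (by rwa [hpi])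

theorem exists_abs_dhProfile_sub_sub_le {ρ : ℝ → ℝ} (hρ : ContDiff ℝ 2 ρ)
    (hρπ : ρ (-Real.pi) = -ρ Real.pi) (hq : qfilt ρ (-Real.pi) = qfilt ρ Real.pi) :
    ∃ C, 0 ≤ C ∧ ∀ x ∈ Set.Icc (-Real.pi) Real.pi, ∀ y,
      |dhProfile ρ y - dhProfile ρ x - (y - x) * qfilt ρ x| ≤ C * (y - x) ^ 2 := by
  have hpi : -Real.pi + 2 * Real.pi = Real.pi := by ring
  have hq' : qfilt ρ (-Real.pi) = qfilt ρ (-Real.pi + 2 * Real.pi) := by rwa [hpi]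
  obtain ⟨C, hC0, hC⟩ := exists_norm_periodize_sub_sub_smul_le Real.two_pi_pos
    (contDiff_id.mul hρ) (by simp only [hpi, hρπ, id, neg_mul_neg]) hq'
  refine ⟨C, hC0, fun x hx y => ?_⟩
  rw [← periodize_eq_self Real.two_pi_pos hq' (by rwa [hpi])]
  exact hC x y

/-- The symbol `ikρ(kh)` of `D_h`, extended from `idxs N` to an `N`-periodic function of `k`. -/
def dhSymbol (N : ℤ) (ρ : ℝ → ℝ) (k : ℤ) : ℂ :=
  Complex.I * ((dhProfile ρ (gridPt N k) / hgrid N : ℝ) : ℂ)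

theorem dhSymbol_periodic {N : ℤ} (hN : 0 < N) (ρ : ℝ → ℝ) :
    Function.Periodic (dhSymbol N ρ) N := fun k => by
  rw [dhSymbol, gridPt_add, intCast_mul_hgrid hN, dhProfile, periodize_periodic, dhSymbol,
    dhProfile]

theorem dhSymbol_eq {N k : ℤ} (hN : 0 < N) (hev : Even N) {ρ : ℝ → ℝ}
    (hρπ : ρ (-Real.pi) = -ρ Real.pi) (hk : k ∈ idxs N) :
    dhSymbol N ρ k = Complex.I * k * ρ (gridPt N k) := by
  have hdiv : gridPt N k / hgrid N = k := mul_div_cancel_right₀ _ (hgrid_pos hN).ne'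
  rw [dhSymbol, dhProfile_eq hρπ (gridPt_mem_Icc hN hev hk), mul_div_right_comm, hdiv,
    Complex.ofReal_mul, Complex.ofReal_intCast, mul_assoc]

theorem Dh_eq_multiplier_dhSymbol {N : ℤ} (hN : 0 < N) (hev : Even N) {ρ : ℝ → ℝ}
    (hρπ : ρ (-Real.pi) = -ρ Real.pi) : Dh N ρ = multiplier N (dhSymbol N ρ) :=
  multiplier_congr fun _ hk => (dhSymbol_eq hN hev hρπ hk).symm

end Derivatives

section Remainder

/-- The symbol of the multiplier `w ↦ e^{-imα} r(w)` for `f = e^{imx}`. -/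
def remainderSymbol (N : ℤ) (ρ : ℝ → ℝ) (m k : ℤ) : ℂ :=
  dhSymbol N ρ (k + m) - dhSymbol N ρ k - Complex.I * m * qfilt ρ (gridPt N k)

theorem remainderSymbol_eq {N : ℤ} (hN : 0 < N) (ρ : ℝ → ℝ) (m k : ℤ) :
    remainderSymbol N ρ m k = Complex.I *
      (((dhProfile ρ (gridPt N (k + m)) - dhProfile ρ (gridPt N k) -
        (gridPt N (k + m) - gridPt N k) * qfilt ρ (gridPt N k)) / hgrid N : ℝ) : ℂ) := by
  have hh : (hgrid N : ℂ) ≠ 0 := Complex.ofReal_ne_zero.2 (hgrid_pos hN).ne'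
  rw [remainderSymbol, dhSymbol, dhSymbol, gridPt_add, add_sub_cancel_left]
  push_cast
  field_simp

theorem exists_norm_remainderSymbol_le {ρ : ℝ → ℝ} (hρ : ContDiff ℝ 2 ρ)
    (hρπ : ρ (-Real.pi) = -ρ Real.pi) (hq : qfilt ρ (-Real.pi) = qfilt ρ Real.pi) :
    ∃ C, 0 ≤ C ∧ ∀ N : ℤ, 0 < N → Even N → ∀ m : ℤ, ∀ k ∈ idxs N,
      ‖remainderSymbol N ρ m k‖ ≤ C * hgrid N * (m : ℝ) ^ 2 := by
  obtain ⟨C, hC0, hC⟩ := exists_abs_dhProfile_sub_sub_le hρ hρπ hq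
  refine ⟨C, hC0, fun N hN hev m k hk => ?_⟩
  have hh := hgrid_pos hN
  rw [remainderSymbol_eq hN, norm_mul, Complex.norm_I, one_mul, Complex.norm_real, norm_div,
    Real.norm_of_nonneg hh.le, div_le_iff₀ hh]
  refine (hC _ (gridPt_mem_Icc hN hev hk) (gridPt N (k + m))).trans_eq ?_
  rw [gridPt_add]
  ring

theorem hasSum_DhProdRem {ι : Type*} (N : ℤ) (ρ : ℝ → ℝ) {F : ι → ℝ → ℂ} {f : ℝ → ℂ}
    (hF : ∀ x, HasSum (fun m => F m x) (f x))
    (hF' : ∀ x, HasSum (fun m => deriv (F m) x) (deriv f x)) (w : ℤ → ℂ) :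
    HasSum (fun m => DhProdRem N ρ (F m) w) (DhProdRem N ρ f w) := by
  have hprod : HasSum (fun m j => F m (gridPt N j) * w j) fun j => f (gridPt N j) * w j :=
    Pi.hasSum.2 fun j => (hF _).mul_right _
  exact Pi.hasSum.2 fun i => ((Pi.hasSum.1 (hasSum_multiplier N _ hprod) i).sub
    ((hF _).mul_right _)).sub ((hF' _).mul_left _)

theorem DhProdRem_const_mul_exp {N : ℤ} (hN : 0 < N) (hev : Even N) {ρ : ℝ → ℝ}
    (hρπ : ρ (-Real.pi) = -ρ Real.pi) (a : ℂ) (m : ℤ) (w : ℤ → ℂ) :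
    DhProdRem N ρ (fun x => a * Complex.exp (Complex.I * m * x)) w =
      a • (mode N m * multiplier N (remainderSymbol N ρ m) w) := by
  have hproduct : (fun j => a * Complex.exp (Complex.I * m * gridPt N j) * w j) =
      a • (mode N m * w) := funext fun j => mul_assoc _ _ _
  have hsymbol : remainderSymbol N ρ m = (fun k => dhSymbol N ρ (k + m)) - dhSymbol N ρ -
      (Complex.I * m) • fun k => (qfilt ρ (gridPt N k) : ℂ) := rfl
  have hwq : wq N ρ w = multiplier N (fun k => (qfilt ρ (gridPt N k) : ℂ)) w := rfl
  funext i
  simp only [DhProdRem, hproduct, (hasDerivAt_const_mul_exp a m _).deriv]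
  rw [hsymbol, multiplier_sub, multiplier_sub, multiplier_smul, ← hwq,
    Dh_eq_multiplier_dhSymbol hN hev hρπ, multiplier_const_smul,
    multiplier_mode_mul hN hev (dhSymbol_periodic hN ρ)]
  simp only [Pi.smul_apply, Pi.mul_apply, Pi.sub_apply, smul_eq_mul, mode]
  ring

theorem exists_l2norm_DhProdRem_le {f : ℝ → ℂ} {c : ℤ → ℂ}
    (hc : Summable fun m : ℤ => (m : ℝ) ^ 2 * ‖c m‖)
    (hf : ∀ x : ℝ, HasSum (fun m : ℤ => c m * Complex.exp (Complex.I * m * x)) (f x))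
    {ρ : ℝ → ℝ} (hρ : ContDiff ℝ 2 ρ) (hρπ : ρ (-Real.pi) = -ρ Real.pi)
    (hq : qfilt ρ (-Real.pi) = qfilt ρ Real.pi) :
    ∃ C, 0 ≤ C ∧ ∀ N : ℤ, 0 < N → Even N → ∀ w : ℤ → ℂ,
      l2norm N (DhProdRem N ρ f w) ≤ C * hgrid N * l2norm N w := by
  obtain ⟨C, hC0, hC⟩ := exists_norm_remainderSymbol_le hρ hρπ hq
  refine ⟨C * ∑' m : ℤ, (m : ℝ) ^ 2 * ‖c m‖,
    mul_nonneg hC0 (tsum_nonneg fun m => by positivity), fun N hN hev w => ?_⟩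
  have hseries := hasSum_DhProdRem N ρ hf (hasSum_deriv_of_hasSum_fourier
    (summable_abs_mul_of_summable_sq_mul (fun m => norm_nonneg (c m)) hc) hf) w
  have hterm (m : ℤ) : l2norm N (DhProdRem N ρ (fun x => c m * Complex.exp (Complex.I * m * x)) w) ≤
      C * hgrid N * l2norm N w * ((m : ℝ) ^ 2 * ‖c m‖) := by
    rw [DhProdRem_const_mul_exp hN hev hρπ, l2norm_const_smul hN, l2norm_mode_mul]
    calc ‖c m‖ * l2norm N (multiplier N (remainderSymbol N ρ m) w)
        ≤ ‖c m‖ * (C * hgrid N * (m : ℝ) ^ 2 * l2norm N w) :=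
          mul_le_mul_of_nonneg_left (l2norm_multiplier_le hN hev (hC N hN hev m) w) (norm_nonneg _)
      _ = C * hgrid N * l2norm N w * ((m : ℝ) ^ 2 * ‖c m‖) := by ring
  calc l2norm N (DhProdRem N ρ f w)
      ≤ C * hgrid N * l2norm N w * ∑' m : ℤ, (m : ℝ) ^ 2 * ‖c m‖ :=
        l2norm_le_of_hasSum hN hseries hterm (hc.hasSum.mul_left _)
    _ = C * (∑' m : ℤ, (m : ℝ) ^ 2 * ‖c m‖) * hgrid N * l2norm N w := by ring

end Remainder

namespace IsFilter

variable {ρ : ℝ → ℝ}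

theorem contDiff_two (hρ : IsFilter ρ) : ContDiff ℝ 2 ρ := by
  obtain ⟨r, hr, hsmooth⟩ := hρ.smooth
  exact hsmooth.of_le (by exact_mod_cast hr.le)

theorem qfilt_eq (hρ : IsFilter ρ) (x : ℝ) : qfilt ρ x = ρ x + x * deriv ρ x := by
  have hdiff := (hρ.contDiff_two.differentiable two_ne_zero x).hasDerivAt
  simpa only [qfilt, one_mul] using ((hasDerivAt_id' x).fun_mul hdiff).deriv

theorem neg_pi_eq_neg (hρ : IsFilter ρ) : ρ (-Real.pi) = -ρ Real.pi := by
  rw [hρ.zero_at_neg_pi, hρ.zero_at_pi, neg_zero]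

theorem qfilt_neg_pi (hρ : IsFilter ρ) : qfilt ρ (-Real.pi) = qfilt ρ Real.pi := by
  simp only [hρ.qfilt_eq, hρ.zero_at_neg_pi, hρ.zero_at_pi, hρ.deriv_zero_at_neg_pi,
    hρ.deriv_zero_at_pi, mul_zero]

end IsFilter

theorem Dh_product_rule_general {f : ℝ → ℂ} {a : ℤ → ℂ}
    (ha : Summable fun m : ℤ => (m : ℝ) ^ 2 * ‖a m‖)
    (hf : ∀ x : ℝ, HasSum (fun m : ℤ => a m * Complex.exp (Complex.I * m * x)) (f x))
    {ρ : ℝ → ℝ} (hρ : ContDiff ℝ 2 ρ) (hρπ : ρ (-Real.pi) = -ρ Real.pi)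
    (hq : qfilt ρ (-Real.pi) = qfilt ρ Real.pi) :
    ∃ c : ℝ, 0 < c ∧ ∀ N : ℤ, 2 ≤ N → Even N → ∀ w : ℤ → ℂ, ∀ k : ℕ, k ≤ 1 →
      l2norm N ((Dh N ρ)^[k] (DhProdRem N ρ f w)) ≤ c * l2norm N w ∧
      l2norm N (DhProdRem N ρ f ((Sh N)^[k] w)) ≤ c * l2norm N w := by
  obtain ⟨C, hC0, hC⟩ := exists_l2norm_DhProdRem_le ha hf hρ hρπ hq
  obtain ⟨B, hB0, hB⟩ := exists_l2norm_iterate_le hρ.continuous.continuousOn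
  refine ⟨C * B + 1, by positivity, fun N hN2 hev w k hk => ?_⟩
  have hN : 0 < N := by omega
  have hh := hgrid_pos hN
  have hconst : B / hgrid N * (C * hgrid N * l2norm N w) ≤ (C * B + 1) * l2norm N w := by
    have hw : 0 ≤ l2norm N w := Real.sqrt_nonneg _
    have hcancel : B / hgrid N * (C * hgrid N * l2norm N w) = C * B * l2norm N w := by field_simp
    linarith
  constructor
  · calc l2norm N ((Dh N ρ)^[k] (DhProdRem N ρ f w))
        ≤ B / hgrid N * l2norm N (DhProdRem N ρ f w) := (hB N hN hev k hk _).1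
      _ ≤ B / hgrid N * (C * hgrid N * l2norm N w) := by gcongr; exact hC N hN hev w
      _ ≤ (C * B + 1) * l2norm N w := hconst
  · calc l2norm N (DhProdRem N ρ f ((Sh N)^[k] w))
        ≤ C * hgrid N * l2norm N ((Sh N)^[k] w) := hC N hN hev _
      _ ≤ C * hgrid N * (B / hgrid N * l2norm N w) := by gcongr; exact (hB N hN hev k hk w).2
      _ = B / hgrid N * (C * hgrid N * l2norm N w) := by ring
      _ ≤ (C * B + 1) * l2norm N w := hconst

/-- Lemma 8.6: discrete product rule for the filtered derivative
`D_h`, with remainder a first-order smoothing operator `A_{-1}`. -/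
theorem Dh_product_rule (f : ℝ → ℂ)
    (hper : Function.Periodic f (2 * Real.pi)) (hf : ContDiff ℝ 3 f)
    (ρ : ℝ → ℝ) (hρ : IsFilter ρ) :
    ∃ c : ℝ, 0 < c ∧ ∀ N : ℤ, 2 ≤ N → Even N → ∀ w : ℤ → ℂ, ∀ k : ℕ, k ≤ 1 →
      l2norm N ((Dh N ρ)^[k] (DhProdRem N ρ f w)) ≤ c * l2norm N w ∧
      l2norm N (DhProdRem N ρ f ((Sh N)^[k] w)) ≤ c * l2norm N w := by
  exact Dh_product_rule_general (summable_sq_mul_norm_fourierCoeffOn Real.two_pi_pos hper hf)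
    (hasSum_fourierCoeffOn_two_pi hper (hf.of_le (by norm_num))) hρ.contDiff_two hρ.neg_pi_eq_neg
    hρ.qfilt_neg_pi

end
end
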